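/- Let T > 0 and let f : [0,T] → ℝ be Lebesgue integrable. Then there exists a sequence of finite partitions 0 = t_k^0 < t_k^1 < ⋯ < t_k^{m_k} = T of [0,T], with mesh sup_{1 ≤ i ≤ m_k} (t_k^i − t_k^{i−1}) → 0 as k → ∞, such that the Riemann sums Σ_{i=1}^{m_k} f(t_k^i) (t_k^i − t_k^{i−1}) converge to ∫_0^T f(t) dt as k → ∞. -/

import Mathlib

open MeasureTheory Filter Topology

/-!
Points drawn from a uniform grid of step `h` whose offset `s` is uniform in `(0, h)` give a Riemann
sum of `‖φ‖` whose mean over `s` is exactly `∫ ‖φ‖`, so some offset does no worse than the mean.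
Apply this to `φ = f - g` with `g` continuous and `∫ ‖f - g‖` small: the Riemann sums of `f` and `g`
are then close along that grid, and those of `g` converge as the mesh tends to `0`. The right
endpoint of the interval is a tag of every partition, but with weight at most `h`.
-/

/-- `a = t 0 < t 1 < ⋯ < t m = b` is a partition of `[a, b]`; the values `t i` with `m < i` are
irrelevant. -/
structure IsIntervalPartition (a b : ℝ) (m : ℕ) (t : ℕ → ℝ) : Prop where
  zero_eq : t 0 = a
  last_eq : t m = b
  lt_succ : ∀ i < m, t i < t (i + 1)

/-- The length of the longest of the `m` intervals `[t i, t (i + 1)]`, provided these lengths are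
nonnegative: for an index outside the range the inner supremum is empty, hence `0`. -/
noncomputable def partitionMesh (m : ℕ) (t : ℕ → ℝ) : ℝ :=
  ⨆ i ∈ Finset.range m, (t (i + 1) - t i)

/-- The Riemann sum of `f` over the `m` intervals `[t i, t (i + 1)]`, tagged by their right
endpoints. -/
def rightRiemannSum {E : Type*} [AddCommMonoid E] [Module ℝ E] (f : ℝ → E) (m : ℕ) (t : ℕ → ℝ) :
    E :=
  ∑ i ∈ Finset.range m, (t (i + 1) - t i) • f (t (i + 1))

/-- The endpoints of `[a, a + n * h]` together with the grid points `a + i * h + s`, `i < n`, listed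
in increasing order when `0 < s < h`. Truncating to the interval the grid points of index `-1` and
`n`, which lie outside it, produces the two endpoints. -/
noncomputable def shiftedUniformPartition (a h s : ℝ) (n i : ℕ) : ℝ :=
  max a (min (a + n * h) (a + (i - 1) * h + s))

lemma partitionMesh_le {m : ℕ} {t : ℕ → ℝ} {δ : ℝ} (hδ : 0 ≤ δ)
    (hmesh : ∀ i < m, t (i + 1) - t i ≤ δ) : partitionMesh m t ≤ δ :=
  Real.iSup_le (fun i => Real.iSup_le (fun hi => hmesh i (Finset.mem_range.1 hi)) hδ) hδ

lemma rightRiemannSum_sub {E : Type*} [AddCommGroup E] [Module ℝ E] (f g : ℝ → E)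
    (m : ℕ) (t : ℕ → ℝ) :
    rightRiemannSum (f - g) m t = rightRiemannSum f m t - rightRiemannSum g m t := by
  simp only [rightRiemannSum, Pi.sub_apply, smul_sub, Finset.sum_sub_distrib]

namespace IsIntervalPartition

variable {a b : ℝ} {m : ℕ} {t : ℕ → ℝ}

lemma pos (ht : IsIntervalPartition a b m t) (hab : a < b) : 0 < m := by
  refine Nat.pos_of_ne_zero fun hm => hab.ne ?_
  rw [← ht.zero_eq, ← ht.last_eq, hm]

lemma mem_Icc (ht : IsIntervalPartition a b m t) {i : ℕ} (hi : i ≤ m) : t i ∈ Set.Icc a b := by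
  have hmono : MonotoneOn t (Set.Iic m) := (strictMonoOn_Iic_of_lt_succ ht.lt_succ).monotoneOn
  constructor
  · exact ht.zero_eq ▸ hmono (Nat.zero_le m) hi (Nat.zero_le i)
  · exact ht.last_eq ▸ hmono hi Set.self_mem_Iic hi

lemma partitionMesh_nonneg (ht : IsIntervalPartition a b m t) : 0 ≤ partitionMesh m t :=
  Real.iSup_nonneg fun i => Real.iSup_nonneg fun hi =>
    (sub_pos.2 (ht.lt_succ i (Finset.mem_range.1 hi))).le

end IsIntervalPartition

variable {E : Type*} [NormedAddCommGroup E]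

section BoundedOscillation

variable [NormedSpace ℝ E] [CompleteSpace E] {g : ℝ → E} {ε : ℝ}

lemma norm_sub_smul_sub_integral_le {c d : ℝ} (hcd : c ≤ d) (hg : IntervalIntegrable g volume c d)
    (hosc : ∀ x ∈ Set.Ioc c d, dist (g d) (g x) ≤ ε) :
    ‖(d - c) • g d - ∫ x in c..d, g x‖ ≤ ε * (d - c) := by
  have hdiff : (d - c) • g d - ∫ x in c..d, g x = ∫ x in c..d, (g d - g x) := by
    rw [intervalIntegral.integral_sub intervalIntegrable_const hg, intervalIntegral.integral_const]
  rw [hdiff, ← abs_of_nonneg (sub_nonneg.2 hcd)]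
  refine intervalIntegral.norm_integral_le_of_norm_le_const fun x hx => ?_
  rw [← dist_eq_norm]
  exact hosc x (Set.uIoc_of_le hcd ▸ hx)

lemma IsIntervalPartition.norm_rightRiemannSum_sub_integral_le {a b δ : ℝ} {m : ℕ} {t : ℕ → ℝ}
    (ht : IsIntervalPartition a b m t) (hmesh : ∀ i < m, t (i + 1) - t i ≤ δ)
    (hg : IntegrableOn g (Set.Icc a b))
    (hosc : ∀ x ∈ Set.Icc a b, ∀ y ∈ Set.Icc a b, dist x y ≤ δ → dist (g x) (g y) ≤ ε) :
    ‖rightRiemannSum g m t - ∫ x in a..b, g x‖ ≤ ε * (b - a) := by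
  have hsub : ∀ i < m, Set.Icc (t i) (t (i + 1)) ⊆ Set.Icc a b := fun i hi =>
    Set.Icc_subset_Icc (ht.mem_Icc hi.le).1 (ht.mem_Icc hi).2
  have hint : ∀ i < m, IntervalIntegrable g volume (t i) (t (i + 1)) := fun i hi =>
    (intervalIntegrable_iff_integrableOn_Icc_of_le (ht.lt_succ i hi).le).2
      (hg.mono_set (hsub i hi))
  have hsplit : ∫ x in a..b, g x = ∑ i ∈ Finset.range m, ∫ x in t i..t (i + 1), g x := by
    rw [intervalIntegral.sum_integral_adjacent_intervals hint, ht.zero_eq, ht.last_eq]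
  have hpiece : ∀ i < m, ‖(t (i + 1) - t i) • g (t (i + 1)) - ∫ x in t i..t (i + 1), g x‖
      ≤ ε * (t (i + 1) - t i) := fun i hi => by
    refine norm_sub_smul_sub_integral_le (ht.lt_succ i hi).le (hint i hi) fun x hx => ?_
    refine hosc _ (ht.mem_Icc hi) x (hsub i hi (Set.Ioc_subset_Icc_self hx)) ?_
    rw [Real.dist_eq, abs_of_nonneg (sub_nonneg.2 hx.2)]
    linarith [hx.1, hmesh i hi]
  calc ‖rightRiemannSum g m t - ∫ x in a..b, g x‖
      ≤ ∑ i ∈ Finset.range m, ε * (t (i + 1) - t i) := by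
        rw [hsplit, rightRiemannSum, ← Finset.sum_sub_distrib]
        exact norm_sum_le_of_le _ fun i hi => hpiece i (Finset.mem_range.1 hi)
    _ = ε * (b - a) := by
        rw [← Finset.mul_sum, Finset.sum_range_sub, ht.zero_eq, ht.last_eq]

end BoundedOscillation

section ShiftedUniformPartition

variable {a h s : ℝ} {n : ℕ}

lemma shiftedUniformPartition_succ (hs : s ∈ Set.Ioo 0 h) {i : ℕ} (hi : i < n) :
    shiftedUniformPartition a h s n (i + 1) = a + i * h + s := by
  have hin : (i + 1 : ℝ) ≤ n := by exact_mod_cast hi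
  have hh : 0 < h := hs.1.trans hs.2
  rw [shiftedUniformPartition, Nat.cast_add_one, add_sub_cancel_right, min_eq_right, max_eq_right]
  · nlinarith [hs.1, Nat.cast_nonneg (α := ℝ) i]
  · nlinarith [hs.2]

lemma shiftedUniformPartition_succ_sub_le (hh : 0 ≤ h) (i : ℕ) :
    shiftedUniformPartition a h s n (i + 1) - shiftedUniformPartition a h s n i ≤ h := by
  have hgrid : a + ((i + 1 : ℕ) - 1) * h + s - (a + (i - 1) * h + s) = h := by push_cast; ring
  refine (max_sub_max_le_max _ _ _ _).trans (max_le (by rwa [sub_self]) ?_)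
  refine (le_abs_self _).trans ((abs_min_sub_min_le_max _ _ _ _).trans ?_)
  rw [sub_self, abs_zero, hgrid, abs_of_nonneg hh, max_eq_right hh]

lemma isIntervalPartition_shiftedUniformPartition (hs : s ∈ Set.Ioo 0 h) (hn : 0 < n) :
    IsIntervalPartition a (a + n * h) (n + 1) (shiftedUniformPartition a h s n) where
  zero_eq := by
    refine max_eq_left (min_le_of_right_le ?_)
    rw [Nat.cast_zero]
    linarith [hs.2]
  last_eq := by
    have hh : 0 < h := hs.1.trans hs.2
    rw [shiftedUniformPartition, Nat.cast_add_one, add_sub_cancel_right, min_eq_left,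
      max_eq_right]
    · exact le_add_of_nonneg_right (by positivity)
    · linarith [hs.1]
  lt_succ i hi := by
    have hin : (i : ℝ) ≤ n := by exact_mod_cast Nat.lt_succ_iff.1 hi
    have hh : 0 < h := hs.1.trans hs.2
    have hih : 0 ≤ (i : ℝ) * h ∧ (i : ℝ) * h ≤ n * h := ⟨by positivity, by gcongr⟩
    have hlt_right : a + (i - 1) * h + s < a + n * h := by linarith [hs.2]
    have hleft_lt : a < a + i * h + s := by linarith [hs.1]
    have hlt : a + (i - 1) * h + s < a + i * h + s := by linarith
    have hends : a < a + n * h := lt_add_of_pos_right a (by positivity)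
    rw [shiftedUniformPartition, shiftedUniformPartition, Nat.cast_add_one, add_sub_cancel_right,
      max_lt_max_right_iff, min_lt_min_right_iff, lt_min_iff]
    exact ⟨⟨hlt, hlt_right⟩, hends, hleft_lt⟩

lemma norm_rightRiemannSum_shiftedUniformPartition_le [NormedSpace ℝ E] (φ : ℝ → E)
    (hs : s ∈ Set.Ioo 0 h) (hn : 0 < n) :
    ‖rightRiemannSum φ (n + 1) (shiftedUniformPartition a h s n)‖
      ≤ h * ∑ i ∈ Finset.range n, ‖φ (a + i * h + s)‖ + h * ‖φ (a + n * h)‖ := by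
  set t := shiftedUniformPartition a h s n
  have ht : IsIntervalPartition a (a + n * h) (n + 1) t :=
    isIntervalPartition_shiftedUniformPartition hs hn
  have hterm : ∀ i < n + 1, ‖(t (i + 1) - t i) • φ (t (i + 1))‖ ≤ h * ‖φ (t (i + 1))‖ := by
    intro i hi
    rw [norm_smul, Real.norm_of_nonneg (sub_pos.2 (ht.lt_succ i hi)).le]
    gcongr
    exact shiftedUniformPartition_succ_sub_le (hs.1.trans hs.2).le i
  calc ‖rightRiemannSum φ (n + 1) t‖
      ≤ ∑ i ∈ Finset.range (n + 1), h * ‖φ (t (i + 1))‖ :=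
        norm_sum_le_of_le _ fun i hi => hterm i (Finset.mem_range.1 hi)
    _ = h * ∑ i ∈ Finset.range n, ‖φ (a + i * h + s)‖ + h * ‖φ (a + n * h)‖ := by
        rw [Finset.sum_range_succ, ht.last_eq, Finset.mul_sum]
        congr 1
        refine Finset.sum_congr rfl fun i hi => ?_
        rw [show t (i + 1) = a + i * h + s from
          shiftedUniformPartition_succ hs (Finset.mem_range.1 hi)]

end ShiftedUniformPartition

section Averaging

variable {a h : ℝ} {n : ℕ}

lemma intervalIntegrable_uniform_cell {φ : ℝ → E} (hh : 0 ≤ h)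
    (hφ : IntegrableOn φ (Set.Icc a (a + n * h))) {i : ℕ} (hi : i < n) :
    IntervalIntegrable φ volume (a + i * h) (a + (i + 1 : ℕ) * h) := by
  rw [intervalIntegrable_iff_integrableOn_Icc_of_le (by gcongr; exact i.le_succ)]
  refine hφ.mono_set (Set.Icc_subset_Icc ?_ ?_)
  · exact le_add_of_nonneg_right (by positivity)
  · gcongr
    exact hi

lemma intervalIntegrable_comp_uniform_cell_add {φ : ℝ → E} (hh : 0 ≤ h)
    (hφ : IntegrableOn φ (Set.Icc a (a + n * h))) {i : ℕ} (hi : i < n) :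
    IntervalIntegrable (fun s => φ (a + i * h + s)) volume 0 h := by
  have hlength : a + (i + 1 : ℕ) * h - (a + i * h) = h := by push_cast; ring
  simpa only [sub_self, hlength] using
    (intervalIntegrable_uniform_cell hh hφ hi).comp_add_left (a + i * h)

lemma integral_sum_comp_uniform_cell_add [NormedSpace ℝ E] {φ : ℝ → E} (hh : 0 ≤ h)
    (hφ : IntegrableOn φ (Set.Icc a (a + n * h))) :
    ∫ s in 0..h, ∑ i ∈ Finset.range n, φ (a + i * h + s) = ∫ x in a..a + n * h, φ x := by
  have hshift : ∀ i : ℕ, ∫ s in 0..h, φ (a + i * h + s)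
      = ∫ x in a + i * h..a + (i + 1 : ℕ) * h, φ x := fun i => by
    rw [intervalIntegral.integral_comp_add_left φ, add_zero, Nat.cast_add_one, add_one_mul,
      ← add_assoc]
  calc ∫ s in 0..h, ∑ i ∈ Finset.range n, φ (a + i * h + s)
      = ∑ i ∈ Finset.range n, ∫ s in 0..h, φ (a + i * h + s) :=
        intervalIntegral.integral_finsetSum fun i hi =>
          intervalIntegrable_comp_uniform_cell_add hh hφ (Finset.mem_range.1 hi)
    _ = ∑ i ∈ Finset.range n, ∫ x in a + i * h..a + (i + 1 : ℕ) * h, φ x :=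
        Finset.sum_congr rfl fun i _ => hshift i
    _ = ∫ x in a..a + n * h, φ x := by
        rw [intervalIntegral.sum_integral_adjacent_intervals (a := fun i : ℕ => a + i * h)
          fun i hi => intervalIntegrable_uniform_cell hh hφ hi, Nat.cast_zero, zero_mul, add_zero]

lemma exists_mul_sum_comp_uniform_cell_add_le_integral {φ : ℝ → ℝ} (hh : 0 < h)
    (hφ : IntegrableOn φ (Set.Icc a (a + n * h))) :
    ∃ s ∈ Set.Ioo 0 h, h * ∑ i ∈ Finset.range n, φ (a + i * h + s) ≤ ∫ x in a..a + n * h, φ x := by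
  have hint : IntegrableOn (fun s => ∑ i ∈ Finset.range n, φ (a + i * h + s)) (Set.Ioo 0 h) :=
    integrable_finsetSum _ fun i hi => (intervalIntegrable_iff_integrableOn_Ioo_of_le hh.le).1
      (intervalIntegrable_comp_uniform_cell_add hh.le hφ (Finset.mem_range.1 hi))
  obtain ⟨s, hs, hle⟩ := exists_le_setAverage (by simp [hh]) (by simp) hint
  refine ⟨s, hs, ?_⟩
  rwa [setAverage_eq, ← integral_Ioc_eq_integral_Ioo, ← intervalIntegral.integral_of_le hh.le,
    integral_sum_comp_uniform_cell_add hh.le hφ, Real.volume_real_Ioo_of_le hh.le, sub_zero,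
    smul_eq_mul, le_inv_mul_iff₀ hh] at hle

end Averaging

section IntegrableIntegrand

variable [NormedSpace ℝ E] {a b ε : ℝ}

lemma exists_isIntervalPartition_norm_rightRiemannSum_le {φ : ℝ → E} (hab : a < b)
    (hφ : IntegrableOn φ (Set.Icc a b)) (hε : 0 < ε) :
    ∃ m t, IsIntervalPartition a b m t ∧ (∀ i < m, t (i + 1) - t i ≤ ε) ∧
      ‖rightRiemannSum φ m t‖ ≤ (∫ x in a..b, ‖φ x‖) + ε := by
  have hstep : Tendsto (fun n : ℕ => (b - a) / n) atTop (𝓝 0) :=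
    tendsto_const_div_atTop_nhds_zero_nat _
  have hlast : Tendsto (fun n : ℕ => (b - a) / n * ‖φ b‖) atTop (𝓝 0) := by
    simpa only [zero_mul] using hstep.mul_const ‖φ b‖
  obtain ⟨n, hn, hnε, hnφ⟩ := ((eventually_gt_atTop 0).and
    ((hstep.eventually_le_const hε).and (hlast.eventually_le_const hε))).exists
  set h := (b - a) / n
  have hh : 0 < h := div_pos (sub_pos.2 hab) (Nat.cast_pos.2 hn)
  have hb : b = a + n * h := by
    rw [mul_div_cancel₀ _ (Nat.cast_ne_zero.2 hn.ne'), add_sub_cancel]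
  clear_value h
  subst hb
  obtain ⟨s, hs, hsum⟩ := exists_mul_sum_comp_uniform_cell_add_le_integral hh hφ.norm
  exact ⟨n + 1, shiftedUniformPartition a h s n, isIntervalPartition_shiftedUniformPartition hs hn,
    fun i _ => (shiftedUniformPartition_succ_sub_le hh.le i).trans hnε,
    (norm_rightRiemannSum_shiftedUniformPartition_le φ hs hn).trans (add_le_add hsum hnφ)⟩

lemma exists_isIntervalPartition_norm_rightRiemannSum_sub_integral_le [CompleteSpace E] {f : ℝ → E}
    (hab : a < b) (hf : IntegrableOn f (Set.Icc a b)) (hε : 0 < ε) :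
    ∃ m t, IsIntervalPartition a b m t ∧ (∀ i < m, t (i + 1) - t i ≤ ε) ∧
      ‖rightRiemannSum f m t - ∫ x in a..b, f x‖ ≤ ε := by
  obtain ⟨g, hfg, hg⟩ := Integrable.exists_boundedContinuous_integral_sub_le hf
    (show 0 < ε / 4 by positivity)
  rw [integral_Icc_eq_integral_Ioc, ← intervalIntegral.integral_of_le hab.le] at hfg
  have hba : 0 < b - a := sub_pos.2 hab
  obtain ⟨δ, hδ, hosc⟩ := Metric.uniformContinuousOn_iff_le.1
    (isCompact_Icc.uniformContinuousOn_of_continuous g.continuous.continuousOn)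
    (ε / 4 / (b - a)) (by positivity)
  obtain ⟨m, t, ht, hmesh, hsum⟩ := exists_isIntervalPartition_norm_rightRiemannSum_le hab
    (hf.sub hg) (show 0 < min δ (ε / 4) by positivity)
  refine ⟨m, t, ht, fun i hi => ?_, ?_⟩
  · linarith [hmesh i hi, min_le_right δ (ε / 4)]
  have hdiff : ‖rightRiemannSum f m t - rightRiemannSum g m t‖ ≤ ε / 4 + ε / 4 := by
    rw [← rightRiemannSum_sub]
    exact hsum.trans (add_le_add hfg (min_le_right _ _))
  have hcont : ‖rightRiemannSum g m t - ∫ x in a..b, g x‖ ≤ ε / 4 := by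
    simpa only [div_mul_cancel₀ _ hba.ne'] using ht.norm_rightRiemannSum_sub_integral_le
      (fun i hi => (hmesh i hi).trans (min_le_left _ _)) hg hosc
  have hint : ‖(∫ x in a..b, g x) - ∫ x in a..b, f x‖ ≤ ε / 4 := by
    have hfi := (intervalIntegrable_iff_integrableOn_Icc_of_le hab.le).2 hf
    have hgi := (intervalIntegrable_iff_integrableOn_Icc_of_le hab.le).2 hg
    rw [norm_sub_rev, ← intervalIntegral.integral_sub hfi hgi]
    exact (intervalIntegral.norm_integral_le_integral_norm hab.le).trans hfg
  calc ‖rightRiemannSum f m t - ∫ x in a..b, f x‖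
      ≤ ‖rightRiemannSum f m t - rightRiemannSum g m t‖
        + ‖rightRiemannSum g m t - ∫ x in a..b, g x‖
        + ‖(∫ x in a..b, g x) - ∫ x in a..b, f x‖ := by
        simpa only [dist_eq_norm] using dist_triangle4 (rightRiemannSum f m t)
          (rightRiemannSum g m t) (∫ x in a..b, g x) (∫ x in a..b, f x)
    _ ≤ ε := by linarith

theorem statement4_general [CompleteSpace E] {f : ℝ → E} (hab : a < b)
    (hf : IntegrableOn f (Set.Icc a b)) :
    ∃ (m : ℕ → ℕ) (t : ℕ → ℕ → ℝ),
      (∀ k, IsIntervalPartition a b (m k) (t k)) ∧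
      Tendsto (fun k => partitionMesh (m k) (t k)) atTop (𝓝 0) ∧
      Tendsto (fun k => rightRiemannSum f (m k) (t k)) atTop (𝓝 (∫ x in Set.Icc a b, f x)) := by
  choose m t ht hmesh hsum using fun k : ℕ =>
    exists_isIntervalPartition_norm_rightRiemannSum_sub_integral_le hab hf
      (Nat.one_div_pos_of_nat (α := ℝ) (n := k))
  have hlim := tendsto_one_div_add_atTop_nhds_zero_nat (𝕜 := ℝ)
  refine ⟨m, t, ht, ?_, ?_⟩
  · exact squeeze_zero (fun k => (ht k).partitionMesh_nonneg)
      (fun k => partitionMesh_le Nat.one_div_pos_of_nat.le (hmesh k)) hlim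
  · rw [integral_Icc_eq_integral_Ioc, ← intervalIntegral.integral_of_le hab.le,
      tendsto_iff_norm_sub_tendsto_zero]
    exact squeeze_zero (fun k => norm_nonneg _) hsum hlim

end IntegrableIntegrand

/-- For every Lebesgue integrable `f : [0,T] → ℝ` there exists a sequence
of finite partitions `0 = t_k^0 < t_k^1 < ⋯ < t_k^{m_k} = T` of `[0,T]`, with mesh tending
to `0`, whose right-endpoint Riemann sums `∑ i, f(t_k^i) (t_k^i − t_k^{i−1})` converge to
the Lebesgue integral `∫_0^T f(t) dt`. -/
theorem statement4
    (T : ℝ) (hT : 0 < T) (f : ℝ → ℝ) (hf : IntegrableOn f (Set.Icc 0 T)) :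
    ∃ (m : ℕ → ℕ) (t : ℕ → ℕ → ℝ),
      (∀ k, 0 < m k) ∧
      (∀ k, t k 0 = 0) ∧
      (∀ k, t k (m k) = T) ∧
      (∀ k, ∀ i < m k, t k i < t k (i + 1)) ∧
      -- the mesh tends to zero
      Tendsto (fun k => ⨆ i ∈ Finset.range (m k), (t k (i + 1) - t k i)) atTop (𝓝 0) ∧
      -- the Riemann sums converge to the Lebesgue integral
      Tendsto (fun k => ∑ i ∈ Finset.range (m k), f (t k (i + 1)) * (t k (i + 1) - t k i))
        atTop (𝓝 (∫ s in Set.Icc 0 T, f s)) := by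
  obtain ⟨m, t, ht, hmesh, hsum⟩ := statement4_general hT hf
  exact ⟨m, t, fun k => (ht k).pos hT, fun k => (ht k).zero_eq, fun k => (ht k).last_eq,
    fun k => (ht k).lt_succ, hmesh,
    by simpa only [rightRiemannSum, smul_eq_mul, mul_comm] using hsum⟩
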